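/- Classical Euler-type transformation: for complex parameters with Re(c_j) > Re(b_j) > 0 and x_k ≠ 1 with appropriate convergence, F_A^{(n)}[a; b_1,…,b_n; c_1,…,c_n | x_1,…,x_n] = (1-x_k)^{-a} F_A^{(n)}[a; b_1,…,c_k−b_k,…,b_n; c_1,…,c_n | x_1/(1-x_k),…,−x_k/(1-x_k),…,x_n/(1-x_k)], where the k-th numerator parameter b_k is replaced by c_k − b_k and the k-th argument by −x_k/(1-x_k). -/

import Mathlib

open Finset

/-- Rising factorial (Pochhammer symbol) `(a)_m = a(a+1)⋯(a+m-1)` on `ℂ`. -/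
noncomputable def rising (a : ℂ) (m : ℕ) : ℂ := ∏ j ∈ Finset.range m, (a + j)

/-- The classical Lauricella series `F_A` with parameters indexed by `ι`. -/
noncomputable def lauA {ι : Type} [Fintype ι] [DecidableEq ι] (a : ℂ) (b c x : ι → ℂ) : ℂ :=
  ∑' m : ι → ℕ,
    rising a (∑ i, m i) * (∏ i, rising (b i) (m i) / rising (c i) (m i))
      * ∏ i, x i ^ (m i) / (Nat.factorial (m i) : ℂ)

lemma rising_succ (a : ℂ) (m : ℕ) : rising a (m+1) = rising a m * (a + m) := by
  simp [rising, Finset.prod_range_succ]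

lemma rising_zero (a : ℂ) : rising a 0 = 1 := by simp [rising]

lemma rising_add (a : ℂ) (m j : ℕ) : rising a (m + j) = rising a m * rising (a + m) j := by
  simp only [rising, Finset.prod_range_add]
  congr 1
  refine Finset.prod_congr rfl fun i _ => ?_
  push_cast; ring

lemma rising_one (m : ℕ) : rising 1 m = (m.factorial : ℂ) := by
  induction m with
  | zero => simp [rising]
  | succ m ih => rw [rising_succ, ih, Nat.factorial_succ]; push_cast; ring

lemma add_nat_ne {c : ℂ} (hc : 0 < c.re) (m : ℕ) : c + m ≠ 0 := by
  intro h
  have := congrArg Complex.re h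
  simp at this
  have h2 : (0:ℝ) ≤ m := Nat.cast_nonneg m
  linarith

lemma rising_ne {c : ℂ} (hc : 0 < c.re) (m : ℕ) : rising c m ≠ 0 := by
  rw [rising, Finset.prod_ne_zero_iff]
  intro j _
  exact add_nat_ne hc j

lemma tendsto_ratio (b c : ℂ) (r : ℝ) (hr : 0 < r) :
    Filter.Tendsto (fun m : ℕ => ‖(b + m) / (c + m) / (r : ℂ)‖) Filter.atTop (nhds (1 / r)) := by
  have h1 : Filter.Tendsto (fun m : ℕ => (b / m + 1) / (c / m + 1) / (r : ℂ)) Filter.atTop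
      (nhds (((0:ℂ) + 1) / (0 + 1) / r)) := by
    have hb : ∀ b : ℂ, Filter.Tendsto (fun m : ℕ => b / m) Filter.atTop (nhds 0) :=
      fun b => tendsto_const_div_atTop_nhds_zero_nat b
    refine ((((hb b).add_const 1).div ((hb c).add_const 1) (by simp))).div_const _
  have h2 := h1.norm
  have e : ‖((0:ℂ) + 1) / (0 + 1) / r‖ = 1 / r := by
    simp [abs_of_pos hr]
  rw [e] at h2
  refine h2.congr' ?_
  filter_upwards [Filter.eventually_gt_atTop 0] with m hm
  have hm' : (m : ℂ) ≠ 0 := by exact_mod_cast hm.ne'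
  congr 2
  have : b + m = (b / m + 1) * m := by field_simp
  rw [this, show c + m = (c / m + 1) * m by field_simp, mul_div_mul_right _ _ hm']

lemma rising_bound (b : ℂ) {c : ℂ} (hc : 0 < c.re) {r : ℝ} (hr : 1 < r) :
    ∃ C : ℝ, 0 ≤ C ∧ ∀ m, ‖rising b m / rising c m‖ ≤ C * r ^ m := by
  have hr0 : 0 < r := by linarith
  have hr1 : 1 / r < 1 := by rw [div_lt_one hr0]; exact hr
  obtain ⟨ρ, hρ, hρ1⟩ := exists_between hr1
  have hs : Summable fun m : ℕ => rising b m / rising c m / (r : ℂ) ^ m := by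
    refine summable_of_ratio_norm_eventually_le hρ1 ?_
    filter_upwards [(tendsto_ratio b c r hr0).eventually_le_const hρ] with m hm
    have hrc : (r : ℂ) ≠ 0 := by exact_mod_cast hr0.ne'
    have := add_nat_ne hc m
    have h3 := rising_ne hc m
    have : rising b (m+1) / rising c (m+1) / (r : ℂ) ^ (m+1)
        = (b + m) / (c + m) / (r : ℂ) * (rising b m / rising c m / (r : ℂ) ^ m) := by
      rw [rising_succ, rising_succ, pow_succ]
      field_simp
    rw [this, norm_mul]
    gcongr
  obtain ⟨C, hC⟩ := hs.tendsto_atTop_zero.norm.bddAbove_range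
  have hC' : ∀ m, ‖rising b m / rising c m / (r : ℂ) ^ m‖ ≤ C := fun m => hC ⟨m, rfl⟩
  refine ⟨C, (norm_nonneg _).trans (hC' 0), fun m => ?_⟩
  have := hC' m
  rw [norm_div, norm_pow, Complex.norm_real, Real.norm_of_nonneg hr0.le,
    div_le_iff₀ (by positivity)] at this
  exact this

lemma summable_multinomial {ι : Type} [Fintype ι] [DecidableEq ι] (y : ι → ℝ) (hy : ∀ i, 0 ≤ y i)
    (h : ∑ i, y i < 1) :
    Summable fun m : ι → ℕ => (Nat.multinomial Finset.univ m : ℝ) * ∏ i, y i ^ m i := by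
  have hS : 0 ≤ ∑ i, y i := Finset.sum_nonneg fun i _ => hy i
  have hn : ∀ m : ι → ℕ, 0 ≤ (Nat.multinomial Finset.univ m : ℝ) * ∏ i, y i ^ m i := fun m =>
    mul_nonneg (Nat.cast_nonneg _) (Finset.prod_nonneg fun i _ => pow_nonneg (hy i) _)
  refine summable_of_sum_le (c := (1 - ∑ i, y i)⁻¹) hn fun u => ?_
  let M := u.sup fun m => ∑ i, m i
  calc _ ≤ ∑ m ∈ (Finset.range (M+1)).biUnion (fun N => Finset.piAntidiag Finset.univ N),
        (Nat.multinomial Finset.univ m : ℝ) * ∏ i, y i ^ m i := by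
        refine Finset.sum_le_sum_of_subset_of_nonneg ?_ fun m _ _ => hn m
        intro m hm
        simp only [Finset.mem_biUnion, Finset.mem_range, Finset.mem_piAntidiag]
        exact ⟨_, Nat.lt_succ_of_le (Finset.le_sup (f := fun m : ι → ℕ => ∑ i, m i) hm), rfl,
          fun _ _ => Finset.mem_univ _⟩
    _ = ∑ N ∈ Finset.range (M+1), (∑ i, y i) ^ N := by
        rw [Finset.sum_biUnion]
        · refine Finset.sum_congr rfl fun N _ => ?_
          rw [Finset.sum_pow_eq_sum_piAntidiag]
        · intro a _ b _ hab
          refine Finset.disjoint_left.2 fun m h1 h2 => hab ?_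
          rw [Finset.mem_piAntidiag] at h1 h2
          exact h1.1.symm.trans h2.1
    _ ≤ _ := by
        rw [← tsum_geometric_of_lt_one hS h]
        exact (summable_geometric_of_lt_one hS h).sum_le_tsum _ fun i _ => pow_nonneg hS _

lemma summable_lauA {ι : Type} [Fintype ι] [DecidableEq ι] (a : ℂ) (b c x : ι → ℂ)
    (hc : ∀ i, 0 < (c i).re) (h : ∑ i, ‖x i‖ < 1) :
    Summable fun m : ι → ℕ =>
      rising a (∑ i, m i) * (∏ i, rising (b i) (m i) / rising (c i) (m i))
      * ∏ i, x i ^ (m i) / (Nat.factorial (m i) : ℂ) := by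
  obtain ⟨r, hr, hr2⟩ : ∃ r : ℝ, 1 < r ∧ r * r * ∑ i, ‖x i‖ < 1 := by
    have : Filter.Tendsto (fun r : ℝ => r * r * ∑ i, ‖x i‖) (nhdsWithin 1 (Set.Ioi 1))
        (nhds (1 * 1 * ∑ i, ‖x i‖)) :=
      ((Continuous.tendsto (by fun_prop) 1)).mono_left nhdsWithin_le_nhds
    have h2 := this.eventually_lt_const (u := 1) (by simpa using h)
    obtain ⟨r, h3, h4⟩ := (h2.and self_mem_nhdsWithin).exists
    exact ⟨r, h4, h3⟩
  have hr0 : 0 < r := by linarith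
  obtain ⟨A, hA, hA'⟩ := rising_bound a (c := 1) (by simp) hr
  choose C hC hC' using fun i => rising_bound (b i) (hc i) hr
  have hs := (summable_multinomial (fun i => r * r * ‖x i‖) (fun i => by positivity)
    (by rw [← Finset.mul_sum]; exact hr2)).mul_left (A * ∏ i, C i)
  refine Summable.of_norm_bounded hs fun m => ?_
  have e1 : ‖rising a (∑ i, m i)‖ ≤ A * r ^ (∑ i, m i) * ((∑ i, m i).factorial : ℝ) := by
    have := hA' (∑ i, m i)
    rw [rising_one, norm_div, Complex.norm_natCast, div_le_iff₀ (by positivity)] at this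
    exact this
  have e2 : ‖∏ i, rising (b i) (m i) / rising (c i) (m i)‖ ≤ ∏ i, C i * r ^ m i := by
    rw [norm_prod]
    exact Finset.prod_le_prod (fun i _ => norm_nonneg _) fun i _ => hC' i _
  have e3 : ((∑ i, m i).factorial : ℝ) =
      (∏ i, ((m i).factorial : ℝ)) * (Nat.multinomial Finset.univ m : ℝ) := by
    have := Nat.multinomial_spec Finset.univ m
    exact_mod_cast this.symm
  have hp : (∏ i, ((m i).factorial : ℝ)) ≠ 0 :=
    Finset.prod_ne_zero_iff.2 fun i _ => by positivity
  rw [norm_mul, norm_mul]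
  calc _ ≤ (A * r ^ (∑ i, m i) * ((∑ i, m i).factorial : ℝ)) * (∏ i, C i * r ^ m i) *
        ‖∏ i, x i ^ (m i) / (Nat.factorial (m i) : ℂ)‖ := by
        gcongr
    _ = _ := by
        rw [e3]
        simp only [norm_prod, norm_div, norm_pow, Complex.norm_natCast, Finset.prod_mul_distrib,
          Finset.prod_div_distrib, mul_pow, Finset.prod_pow_eq_pow_sum]
        field_simp
lemma choose_neg_eq (A z : ℂ) (n : ℕ) :
    Ring.choose (-A) n * (-z) ^ n = rising A n * z ^ n / (n.factorial : ℂ) := by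
  have h1 : ∀ n : ℕ, (descPochhammer ℤ n).smeval (-A) = (-1) ^ n * rising A n := by
    intro n
    induction n with
    | zero => simp [rising]
    | succ n ih =>
      rw [descPochhammer_succ_right, Polynomial.smeval_mul, ih, rising_succ]
      simp [Polynomial.smeval_natCast]
      ring
  have h2 := Ring.descPochhammer_eq_factorial_smul_choose (-A) n
  rw [h1, nsmul_eq_mul] at h2
  have h3 : (n.factorial : ℂ) ≠ 0 := by exact_mod_cast n.factorial_ne_zero
  rw [eq_div_iff h3, mul_right_comm, mul_comm (Ring.choose _ _), ← h2, neg_pow z]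
  have : ((-1 : ℂ) ^ n) * (-1) ^ n = 1 := by rw [← mul_pow]; simp
  linear_combination (rising A n * z ^ n) * this

lemma hasSum_binom (A : ℂ) {z : ℂ} (hz : ‖z‖ < 1) :
    HasSum (fun n : ℕ => rising A n * z ^ n / (n.factorial : ℂ)) ((1 - z) ^ (-A)) := by
  have h := (Complex.one_add_cpow_hasFPowerSeriesOnBall_zero (a := -A)).hasSum (y := -z)
    (by rw [← ENNReal.ofReal_one, Metric.eball_ofReal]; simpa using hz)
  rw [zero_add, ← sub_eq_add_neg] at h
  have e : (fun n : ℕ => rising A n * z ^ n / (n.factorial : ℂ)) =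
      fun n => (binomialSeries ℂ (-A) n) fun _ => -z := by
    funext n
    rw [binomialSeries_apply, ← choose_neg_eq]
    simp
  rw [e]
  exact h

lemma Gamma_rising {b : ℂ} (hb : 0 < b.re) (m : ℕ) :
    Complex.Gamma (b + m) = rising b m * Complex.Gamma b := by
  induction m with
  | zero => simp [rising]
  | succ m ih =>
    rw [rising_succ, Nat.cast_succ, ← add_assoc, Complex.Gamma_add_one _ (add_nat_ne hb m), ih]
    ring

lemma beta_ne {b d : ℂ} (hb : 0 < b.re) (hd : 0 < d.re) : Complex.betaIntegral b d ≠ 0 := by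
  have hbd : 0 < (b + d).re := by simp; linarith
  rw [Complex.betaIntegral_eq_Gamma_mul_div _ _ hb hd]
  exact div_ne_zero (mul_ne_zero (Complex.Gamma_ne_zero_of_re_pos hb)
    (Complex.Gamma_ne_zero_of_re_pos hd)) (Complex.Gamma_ne_zero_of_re_pos hbd)

lemma beta_rising {b d : ℂ} (hb : 0 < b.re) (hd : 0 < d.re) (m : ℕ) :
    Complex.betaIntegral (b + m) d =
      rising b m / rising (b + d) m * Complex.betaIntegral b d := by
  have hbd : 0 < (b + d).re := by simp; linarith
  have hbm : 0 < (b + m).re := by simp; positivity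
  rw [Complex.betaIntegral_eq_Gamma_mul_div _ _ hb hd,
    Complex.betaIntegral_eq_Gamma_mul_div _ _ hbm hd, Gamma_rising hb,
    show b + m + d = b + d + m by ring, Gamma_rising hbd]
  have := rising_ne hbd m
  have := Complex.Gamma_ne_zero_of_re_pos hbd
  field_simp

lemma hasSum_2F1 (A : ℂ) {b d x : ℂ} (hb : 0 < b.re) (hd : 0 < d.re) (hx : ‖x‖ < 1) :
    HasSum (fun m : ℕ => rising A m * (rising b m / rising (b + d) m) * (x ^ m / (m.factorial : ℂ))
        * Complex.betaIntegral b d)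
      (∫ t in (0:ℝ)..1, ((t : ℂ) ^ (b - 1) * (1 - (t : ℂ)) ^ (d - 1)) * (1 - x * t) ^ (-A)) := by
  have hint := Complex.betaIntegral_convergent hb hd
  have hsn : Summable fun m : ℕ => ‖rising A m * x ^ m / (m.factorial : ℂ)‖ :=
    (hasSum_binom A hx).summable.norm
  have key := intervalIntegral.hasSum_integral_of_dominated_convergence
    (μ := MeasureTheory.volume) (a := 0) (b := 1)
    (F := fun (m : ℕ) (t : ℝ) => ((t : ℂ) ^ (b - 1) * (1 - (t : ℂ)) ^ (d - 1)) *
      (rising A m * (x * t) ^ m / (m.factorial : ℂ)))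
    (f := fun t : ℝ => ((t : ℂ) ^ (b - 1) * (1 - (t : ℂ)) ^ (d - 1)) * (1 - x * t) ^ (-A))
    (fun m t => ‖(t : ℂ) ^ (b - 1) * (1 - (t : ℂ)) ^ (d - 1)‖ *
      ‖rising A m * x ^ m / (m.factorial : ℂ)‖) ?_ ?_ ?_ ?_ ?_
  · refine Eq.subst (motive := fun f : ℕ → ℂ => HasSum f _) (funext fun m => ?_) key
    symm
    have : ∀ t ∈ Set.uIoc (0:ℝ) 1, ((t : ℂ) ^ (b - 1) * (1 - (t : ℂ)) ^ (d - 1)) *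
      (rising A m * (x * t) ^ m / (m.factorial : ℂ)) =
      (rising A m * x ^ m / (m.factorial : ℂ)) *
        ((t : ℂ) ^ (b + m - 1) * (1 - (t : ℂ)) ^ (d - 1)) := by
      intro t ht
      rw [Set.uIoc_of_le zero_le_one] at ht
      have h0 : (t : ℂ) ≠ 0 := by exact_mod_cast ht.1.ne'
      rw [show b + m - 1 = (b - 1) + m by ring, Complex.cpow_add _ _ h0, Complex.cpow_natCast,
        mul_pow]
      ring
    rw [intervalIntegral.integral_congr_ae (Filter.Eventually.of_forall this),
      intervalIntegral.integral_const_mul]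
    have hb' := beta_rising hb hd m
    rw [Complex.betaIntegral] at hb'
    rw [hb']
    ring
  · intro m
    rw [Set.uIoc_of_le zero_le_one]
    have h1 := hint.1.aestronglyMeasurable
    refine h1.mul (Continuous.aestronglyMeasurable ?_)
    fun_prop
  · intro m
    refine Filter.Eventually.of_forall fun t ht => ?_
    rw [Set.uIoc_of_le zero_le_one] at ht
    rw [norm_mul]
    have : ‖(t : ℂ)‖ ≤ 1 := by
      rw [Complex.norm_real, Real.norm_of_nonneg ht.1.le]; exact ht.2
    simp only [norm_mul, norm_div, norm_pow]
    gcongr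
    exact mul_le_of_le_one_right (norm_nonneg _) this
  · exact Filter.Eventually.of_forall fun t _ => hsn.mul_left _
  · simp only [tsum_mul_left]
    exact hint.norm.mul_const _
  · refine Filter.Eventually.of_forall fun t ht => ?_
    rw [Set.uIoc_of_le zero_le_one] at ht
    refine (hasSum_binom A ?_).mul_left _
    have : ‖(t : ℂ)‖ ≤ 1 := by
      rw [Complex.norm_real, Real.norm_of_nonneg ht.1.le]; exact ht.2
    rw [norm_mul]
    exact (mul_le_of_le_one_right (norm_nonneg _) this).trans_lt hx

lemma re_pos_of_norm {z : ℂ} (hz : ‖z‖ < 1) : 0 < (1 - z).re := by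
  have := (Complex.re_le_norm z)
  simp; linarith

lemma mul_cpow_of_re_pos {z w : ℂ} (hz : 0 < z.re) (hw : 0 < w.re) (s : ℂ) :
    (z * w) ^ s = z ^ s * w ^ s := by
  have h1 := Complex.abs_arg_lt_pi_div_two_iff.2 (Or.inl hz)
  have h2 := Complex.abs_arg_lt_pi_div_two_iff.2 (Or.inl hw)
  rw [abs_lt] at h1 h2
  have hz0 : z ≠ 0 := by rintro rfl; simp at hz
  have hw0 : w ≠ 0 := by rintro rfl; simp at hw
  rw [Complex.cpow_def_of_ne_zero (mul_ne_zero hz0 hw0), Complex.cpow_def_of_ne_zero hz0,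
    Complex.cpow_def_of_ne_zero hw0, Complex.log_mul hz0 hw0 ⟨by linarith, by linarith⟩,
    add_mul, Complex.exp_add]

lemma pfaff (A : ℂ) {b d x : ℂ} (hb : 0 < b.re) (hd : 0 < d.re) (hx : ‖x‖ < 1)
    (hx' : ‖-x / (1 - x)‖ < 1) :
    ∑' m : ℕ, rising A m * (rising b m / rising (b + d) m) * (x ^ m / (m.factorial : ℂ)) =
    (1 - x) ^ (-A) * ∑' m : ℕ, rising A m * (rising d m / rising (b + d) m) *
      ((-x / (1 - x)) ^ m / (m.factorial : ℂ)) := by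
  have h1 := (hasSum_2F1 A hb hd hx).tsum_eq
  have h2 := (hasSum_2F1 A hd hb hx').tsum_eq
  rw [tsum_mul_right] at h1 h2
  rw [add_comm d b, Complex.betaIntegral_symm] at h2
  refine mul_right_cancel₀ (beta_ne hb hd) ?_
  rw [mul_assoc, h1, h2, ← intervalIntegral.integral_const_mul]
  have h3 := intervalIntegral.integral_comp_sub_left (a := 0) (b := 1)
    (fun t : ℝ => ((t : ℂ) ^ (b - 1) * (1 - (t : ℂ)) ^ (d - 1)) * (1 - x * t) ^ (-A)) 1
  simp only [sub_self, sub_zero] at h3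
  rw [← h3]
  refine intervalIntegral.integral_congr fun t ht => ?_
  rw [Set.uIcc_of_le zero_le_one] at ht
  have hn : ‖-x / (1 - x) * t‖ < 1 := by
    have : ‖(t : ℂ)‖ ≤ 1 := by
      rw [Complex.norm_real, Real.norm_of_nonneg ht.1]; exact ht.2
    rw [norm_mul]
    exact (mul_le_of_le_one_right (norm_nonneg _) this).trans_lt hx'
  have hne : 1 - x ≠ 0 := by
    intro h; have := re_pos_of_norm hx; rw [h] at this; simp at this
  have e : 1 - x * ((1 - t : ℝ) : ℂ) = (1 - x) * (1 - -x / (1 - x) * t) := by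
    push_cast; field_simp; ring
  simp only [e]
  rw [mul_cpow_of_re_pos (re_pos_of_norm hx) (re_pos_of_norm hn)]
  push_cast
  rw [sub_sub_cancel]
  ring
lemma lauA_split {n : ℕ} (a : ℂ) (b c x : Fin n → ℂ) (k : Fin n)
    (hc : ∀ i, 0 < (c i).re) (h : ∑ i, ‖x i‖ < 1) :
    lauA a b c x = ∑' m : {j // j ≠ k} → ℕ,
      (rising a (∑ i, m i) * (∏ i : {j // j ≠ k}, rising (b i) (m i) / rising (c i) (m i))
        * ∏ i : {j // j ≠ k}, x i ^ (m i) / (Nat.factorial (m i) : ℂ)) *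
      ∑' j : ℕ, rising (a + (∑ i, m i : ℕ)) j * (rising (b k) j / rising (c k) j) *
        (x k ^ j / (j.factorial : ℂ)) := by
  have hs := summable_lauA a b c x hc h
  let e : ({j // j ≠ k} → ℕ) × ℕ ≃ (Fin n → ℕ) :=
    (Equiv.prodComm _ _).trans (Equiv.funSplitAt k ℕ).symm
  rw [lauA, ← e.tsum_eq]
  rw [← e.summable_iff] at hs
  have hs' := hs.tsum_prod
  simp only [Function.comp_def] at hs'
  rw [hs']
  refine tsum_congr fun m => ?_
  rw [← tsum_mul_left]
  refine tsum_congr fun j => ?_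
  have ek : e (m, j) k = j := by simp [e, Equiv.funSplitAt, Equiv.piSplitAt]
  have ei : ∀ i : {j // j ≠ k}, e (m, j) i = m i := by
    intro i
    simp [e, Equiv.funSplitAt, Equiv.piSplitAt, i.2]
  rw [Fintype.sum_eq_add_sum_subtype_ne _ k, Fintype.prod_eq_mul_prod_subtype_ne _ k,
    Fintype.prod_eq_mul_prod_subtype_ne _ k]
  simp only [ek, ei]
  rw [add_comm j, rising_add]
  ring

theorem lauA_euler_transformation (n : ℕ) (a : ℂ) (b c x : Fin n → ℂ) (k : Fin n)
    (hbc : ∀ j, 0 < (b j).re ∧ (b j).re < (c j).re)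
    (hxk : x k ≠ 1)
    (hconv : ∑ i, ‖x i‖ < 1)
    (hconv' : ∑ i, ‖Function.update (fun i => x i / (1 - x k)) k
        (-x k / (1 - x k)) i‖ < 1) :
    lauA a b c x =
      (1 - x k) ^ (-a) *
        lauA a (Function.update b k (c k - b k)) c
          (Function.update (fun i => x i / (1 - x k)) k (-x k / (1 - x k))) := by
  have hc : ∀ j, 0 < (c j).re := fun j => (hbc j).1.trans (hbc j).2
  have hk : ‖x k‖ < 1 :=
    (Finset.single_le_sum (f := fun i => ‖x i‖) (fun i _ => norm_nonneg _)
      (Finset.mem_univ k)).trans_lt hconv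
  have hk' : ‖-x k / (1 - x k)‖ < 1 := by
    have := (Finset.single_le_sum (f := fun i => ‖Function.update (fun i => x i / (1 - x k)) k
        (-x k / (1 - x k)) i‖) (fun i _ => norm_nonneg _)
      (Finset.mem_univ k)).trans_lt hconv'
    simpa using this
  have hne : 1 - x k ≠ 0 := sub_ne_zero.2 hxk.symm
  rw [lauA_split a b c x k hc hconv, lauA_split a _ c _ k hc hconv', ← tsum_mul_left]
  refine tsum_congr fun m => ?_
  have hd : 0 < (c k - b k).re := by simpa using (hbc k).2
  have hp := pfaff (a + (∑ i, m i : ℕ)) (hbc k).1 hd hk hk'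
  rw [add_sub_cancel] at hp
  rw [hp]
  have hu : ∀ i : {j // j ≠ k}, Function.update b k (c k - b k) i = b i := fun i => by
    simp [i.2]
  have hv : ∀ i : {j // j ≠ k}, Function.update (fun i => x i / (1 - x k)) k
        (-x k / (1 - x k)) i = x i / (1 - x k) := fun i => by
    simp [i.2]
  simp only [hu, hv, Function.update_self]
  rw [neg_add, Complex.cpow_add _ _ hne, Complex.cpow_neg _ ((∑ i, m i : ℕ) : ℂ),
    Complex.cpow_natCast]
  simp only [div_pow, Finset.prod_div_distrib, Finset.prod_pow_eq_pow_sum]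
  ring
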